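/- arXiv:1808.00070 — 2 statements merged into one kernel-verified Lean document; each statement's English description precedes it below -/
import Mathlib

section
/- Let k ≥ 2 be an even integer and let D be a finite digraph belonging to the family 𝒟₁. Then the Cartesian product D □ C_k^0 is an ECD digraph. -/
/-- The closed out-neighborhood of `v` in the digraph with arc relation `A`. -/
def closedOut {V : Type*} (A : V → V → Prop) (v : V) : Set V := {v} ∪ {u | A v u}

/-- `S` is an efficient closed dominating (ECD) set: the closed out-neighborhoods
centered in vertices of `S` are pairwise disjoint and cover the whole vertex set. -/
def IsECD {V : Type*} (A : V → V → Prop) (S : Set V) : Prop :=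
  (∀ v ∈ S, ∀ w ∈ S, v ≠ w → closedOut A v ∩ closedOut A w = ∅) ∧
  (⋃ v ∈ S, closedOut A v) = Set.univ

/-- A digraph is an ECD digraph if it admits an ECD set. -/
def IsECDDigraph {V : Type*} (A : V → V → Prop) : Prop := ∃ S, IsECD A S

/-- `S` is an ECD set of the subdigraph induced by `T` (neighborhoods restricted to `T`). -/
def IsECDWithin {V : Type*} (A : V → V → Prop) (T S : Set V) : Prop :=
  S ⊆ T ∧
  (∀ v ∈ S, ∀ w ∈ S, v ≠ w → (closedOut A v ∩ T) ∩ (closedOut A w ∩ T) = ∅) ∧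
  (⋃ v ∈ S, closedOut A v ∩ T) = T

/-- Arc relation of the Cartesian product of two digraphs. -/
def cartArc {V W : Type*} (A : V → V → Prop) (B : W → W → Prop) :
    V × W → V × W → Prop :=
  fun p q => (A p.1 q.1 ∧ p.2 = q.2) ∨ (p.1 = q.1 ∧ B p.2 q.2)

/-- Arc relation of the directed cycle `C_k^0` on `ZMod k`: arcs `(i, i+1)`. -/
def cycArc (k : ℕ) : ZMod k → ZMod k → Prop := fun i j => j = i + 1

/-- The subdigraph induced by `T` belongs to `𝒟₁` with the partition `W, Z, V'`. -/
def InD1OnParts {V : Type*} (A : V → V → Prop) (T W Z V' : Set V) : Prop :=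
  W ∪ Z ∪ V' = T ∧ Disjoint W Z ∧ Disjoint W V' ∧ Disjoint Z V' ∧
  IsECDWithin A (W ∪ V') W ∧ IsECDWithin A (Z ∪ V') Z ∧
  ∀ w ∈ W, ∀ z ∈ Z, ¬ A w z ∧ ¬ A z w

/-- The subdigraph induced by `T` belongs to the family `𝒟₁`. -/
def InD1On {V : Type*} (A : V → V → Prop) (T : Set V) : Prop :=
  ∃ W Z V', InD1OnParts A T W Z V'

/-- The digraph belongs to the family `𝒟₁`. -/
def InD1 {V : Type*} (A : V → V → Prop) : Prop := InD1On A Set.univ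

/-- The subdigraph induced by `T` belongs to the family `𝒟₂`. -/
def InD2On {V : Type*} (A : V → V → Prop) (T : Set V) : Prop :=
  ∃ U1 U2 U3 : Set V, U1 ∪ U2 ∪ U3 = T ∧
    Disjoint U1 U2 ∧ Disjoint U1 U3 ∧ Disjoint U2 U3 ∧
    (∀ x ∈ T, ∀ y ∈ T, A x y →
      (x ∈ U1 ∧ y ∈ U2) ∨ (x ∈ U2 ∧ y ∈ U3) ∨ (x ∈ U3 ∧ y ∈ U1)) ∧
    IsECDWithin A (U1 ∪ U2) U1 ∧ IsECDWithin A (U2 ∪ U3) U2 ∧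
    IsECDWithin A (U3 ∪ U1) U3

/-- The digraph belongs to the family `𝒟₂`. -/
def InD2 {V : Type*} (A : V → V → Prop) : Prop := InD2On A Set.univ

/-- The digraph belongs to the family `𝒟₃`. -/
def InD3 {V : Type*} (A : V → V → Prop) : Prop :=
  ∃ V1 V2 W Z V' : Set V, V1 ∪ V2 = Set.univ ∧ Disjoint V1 V2 ∧
    InD1OnParts A V1 W Z V' ∧ InD2On A V2 ∧
    (∀ x y, A x y →
      (x ∈ V1 ∧ y ∈ V1) ∨ (x ∈ V2 ∧ y ∈ V2) ∨ (x ∈ V' ∧ y ∈ V2)) ∧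
    ∃ x ∈ V', ∃ y ∈ V2, A x y

/-!
List the layers of a set of vertices of `D □ F` as a family `S i ⊆ V(D)`. If every vertex of `F`
has exactly one in-neighbour, then `(x, j)` is dominated along an arc of `F` exactly when `x ∈ S i`,
where `i` is the in-neighbour of `j`; hence `S j` has to dominate every vertex outside `S i`
exactly once, and no vertex of `S i`. For `D` in `𝒟₁` the parts `W` and `Z` stand in this
relation to each other, in both orders, so they may alternate along a properly `2`-coloured `F`.
-/

section ECD

variable {V : Type*} {A : V → V → Prop} {S T : Set V}

theorem isECDWithin_univ : IsECDWithin A Set.univ S ↔ IsECD A S := by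
  simp only [IsECDWithin, IsECD, Set.subset_univ, Set.inter_univ, true_and]

theorem isECDWithin_iff_existsUnique :
    IsECDWithin A T S ↔ S ⊆ T ∧ ∀ x ∈ T, ∃! v, v ∈ S ∧ x ∈ closedOut A v := by
  refine and_congr_right fun _ => ⟨?_, fun h => ⟨?_, ?_⟩⟩
  · rintro ⟨disjoint, cover⟩ x hx
    have dominated : x ∈ ⋃ v ∈ S, closedOut A v ∩ T := cover.symm ▸ hx
    obtain ⟨v, hv, hxv, -⟩ := Set.mem_iUnion₂.1 dominated
    refine ⟨v, ⟨hv, hxv⟩, fun w ⟨hw, hxw⟩ => ?_⟩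
    by_contra hne
    exact Set.eq_empty_iff_forall_notMem.1 (disjoint w hw v hv hne) x ⟨⟨hxw, hx⟩, hxv, hx⟩
  · intro v hv w hw hne
    refine Set.eq_empty_of_forall_notMem fun x ⟨⟨hxv, hx⟩, hxw, _⟩ => hne ?_
    exact (h x hx).unique ⟨hv, hxv⟩ ⟨hw, hxw⟩
  · refine (Set.iUnion₂_subset fun _ _ => Set.inter_subset_right).antisymm fun x hx => ?_
    obtain ⟨v, hv, hxv⟩ := (h x hx).exists
    exact Set.mem_iUnion₂.2 ⟨v, hv, hxv, hx⟩

theorem isECD_iff_existsUnique : IsECD A S ↔ ∀ x, ∃! v, v ∈ S ∧ x ∈ closedOut A v := by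
  simp only [← isECDWithin_univ, isECDWithin_iff_existsUnique, Set.subset_univ, Set.mem_univ,
    true_and, forall_const]

end ECD

section CartesianProduct

variable {V I : Type*} {A : V → V → Prop} {B : I → I → Prop}

theorem mem_closedOut_cartArc {v x : V} {i j : I} :
    (x, j) ∈ closedOut (cartArc A B) (v, i) ↔ (x ∈ closedOut A v ∧ i = j) ∨ (v = x ∧ B i j) := by
  simp only [closedOut, cartArc, Set.mem_union, Set.mem_singleton_iff, Set.mem_ofPred_eq,
    Prod.mk.injEq]
  grind

theorem isECD_cartArc_of_layers (hB : ∀ j, ∃! i, B i j) {S : I → Set V}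
    (hS : ∀ i j, B i j → IsECDWithin A (S i)ᶜ (S j))
    (hA : ∀ i j, B i j → ∀ v ∈ S j, ∀ x ∈ S i, ¬ A v x) :
    IsECD (cartArc A B) {p | p.1 ∈ S p.2} := by
  refine isECD_iff_existsUnique.2 fun (x, j) => ?_
  obtain ⟨i, hij, hi⟩ := hB j
  obtain ⟨hsub, hdom⟩ := isECDWithin_iff_existsUnique.1 (hS i j hij)
  by_cases hx : x ∈ S i
  · have not_dominated : ∀ v ∈ S j, x ∉ closedOut A v := by
      rintro v hv (rfl | hvx)
      · exact hsub hv hx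
      · exact hA i j hij v hv x hx hvx
    refine ⟨(x, i), ⟨hx, mem_closedOut_cartArc.2 (.inr ⟨rfl, hij⟩)⟩, fun (w, l) ⟨hw, hwx⟩ => ?_⟩
    rcases mem_closedOut_cartArc.1 hwx with ⟨hxw, rfl⟩ | ⟨rfl, hlj⟩
    · exact absurd hxw (not_dominated w hw)
    · rw [hi l hlj]
  · obtain ⟨v, ⟨hv, hxv⟩, hunique⟩ := hdom x hx
    refine ⟨(v, j), ⟨hv, mem_closedOut_cartArc.2 (.inl ⟨hxv, rfl⟩)⟩, fun (w, l) ⟨hw, hwx⟩ => ?_⟩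
    rcases mem_closedOut_cartArc.1 hwx with ⟨hxw, rfl⟩ | ⟨rfl, hlj⟩
    · rw [hunique w ⟨hw, hxw⟩]
    · obtain rfl := hi l hlj
      exact absurd hw hx

end CartesianProduct

theorem InD1.exists_isECDWithin_compl {V : Type*} {A : V → V → Prop} (h : InD1 A) :
    ∃ W Z, IsECDWithin A Zᶜ W ∧ IsECDWithin A Wᶜ Z ∧ ∀ w ∈ W, ∀ z ∈ Z, ¬ A w z ∧ ¬ A z w := by
  obtain ⟨W, Z, V', hcover, hWZ, hWV', hZV', hW, hZ, hA⟩ := h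
  have covered (x : V) : x ∈ W ∪ Z ∪ V' := hcover ▸ Set.mem_univ x
  have compl_Z : W ∪ V' = Zᶜ := by ext x; grind [covered x]
  have compl_W : Z ∪ V' = Wᶜ := by ext x; grind [covered x]
  exact ⟨W, Z, compl_Z ▸ hW, compl_W ▸ hZ, hA⟩

theorem existsUnique_cycArc (k : ℕ) (j : ZMod k) : ∃! i, cycArc k i j :=
  ⟨j - 1, (sub_add_cancel j 1).symm, fun _ hij => eq_sub_of_add_eq hij.symm⟩

theorem exists_two_coloring_cycArc {k : ℕ} (hk : Even k) :
    ∃ c : ZMod k → Bool, ∀ i j, cycArc k i j → c i ≠ c j := by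
  let residue := ZMod.castHom hk.two_dvd (ZMod 2)
  refine ⟨fun i => residue i = 0, ?_⟩
  rintro i _ rfl
  have parity_flips : ∀ a : ZMod 2, decide (a = 0) ≠ decide (a + 1 = 0) := by decide
  simpa only [map_add, map_one] using parity_flips (residue i)

theorem cart_cycle_ecd_of_d1_general {V I : Type*} {A : V → V → Prop} {B : I → I → Prop}
    (hB : ∀ j, ∃! i, B i j) {c : I → Bool} (hc : ∀ i j, B i j → c i ≠ c j) (hD : InD1 A) :
    IsECDDigraph (cartArc A B) := by
  obtain ⟨W, Z, hW, hZ, hA⟩ := hD.exists_isECDWithin_compl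
  let S : I → Set V := fun i => bif c i then W else Z
  have alternates : ∀ i j, B i j → S i = Z ∧ S j = W ∨ S i = W ∧ S j = Z := by
    intro i j hij
    have hne := hc i j hij
    cases hi : c i <;> cases hj : c j <;> simp_all [S]
  refine ⟨{p | p.1 ∈ S p.2}, isECD_cartArc_of_layers hB (fun i j hij => ?_) fun i j hij => ?_⟩
  · rcases alternates i j hij with ⟨hi, hj⟩ | ⟨hi, hj⟩ <;> rw [hi, hj] <;> assumption
  · rcases alternates i j hij with ⟨hi, hj⟩ | ⟨hi, hj⟩ <;> rw [hi, hj]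
    · exact fun w hw z hz => (hA w hw z hz).1
    · exact fun z hz w hw => (hA w hw z hz).2

/-- If `k ≥ 2` is even and the finite digraph `D` belongs to `𝒟₁`,
then `D □ C_k^0` is an ECD digraph. -/
theorem cart_cycle_ecd_of_d1 {V : Type*} [Fintype V] (A : V → V → Prop)
    (k : ℕ) (hk : 2 ≤ k) (hke : Even k) (hD : InD1 A) :
    IsECDDigraph (cartArc A (cycArc k)) := by
  obtain ⟨c, hc⟩ := exists_two_coloring_cycArc hke
  exact cart_cycle_ecd_of_d1_general (existsUnique_cycArc k) hc hD
end

section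
/- Let k ≥ 6 be an integer divisible by 6 and let D be a finite digraph belonging to the family 𝒟₃. Then the Cartesian product D □ C_k^0 is an ECD digraph. -/
/-!
If, for every level `i`, the sets `N⁺[v]` with `v ∈ S i` partition the complement of `S (i - 1)`,
then the vertices `(v, i)` with `v ∈ S i` form an ECD set of `D □ C_k^0`: a vertex `(u, i)` with
`u ∈ S (i - 1)` is dominated along the cycle, any other along `D`. Such a sequence of layers is
given by `W, Z, W, Z, …` on the `𝒟₁` part and by `U₁, U₂, U₃, U₁, …` on the `𝒟₂` part. No arc leads
from a layer of one part to the other part, so the two sequences can be superposed levelwise, with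
common period `6`.
-/

section ClosedOutPartition

variable {V : Type*} {A : V → V → Prop} {S S' T T' : Set V}

/-- The closed out-neighborhoods centered in the vertices of `S` partition `T`. In contrast to
`IsECDWithin`, the neighborhoods are taken in the whole digraph, so no arc may lead from `S` out
of `T`. -/
def IsClosedOutPartition (A : V → V → Prop) (T S : Set V) : Prop :=
  (∀ v ∈ S, closedOut A v ⊆ T) ∧ ∀ u ∈ T, ∃! v, v ∈ S ∧ u ∈ closedOut A v

theorem mem_closedOut {u v : V} : u ∈ closedOut A v ↔ u = v ∨ A v u := Iff.rfl

theorem self_mem_closedOut (A : V → V → Prop) (v : V) : v ∈ closedOut A v := Or.inl rfl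

theorem isECD_of_existsUnique (h : ∀ u, ∃! v, v ∈ S ∧ u ∈ closedOut A v) : IsECD A S := by
  refine ⟨fun v hv w hw hvw ↦ ?_, Set.eq_univ_of_forall fun u ↦ ?_⟩
  · refine Set.disjoint_iff_inter_eq_empty.mp (Set.disjoint_left.mpr fun u huv huw ↦ hvw ?_)
    exact (h u).unique ⟨hv, huv⟩ ⟨hw, huw⟩
  · obtain ⟨v, hv, huv⟩ := (h u).exists
    exact Set.mem_biUnion hv huv

theorem IsECDWithin.isClosedOutPartition (h : IsECDWithin A T S)
    (hout : ∀ v ∈ S, closedOut A v ⊆ T) : IsClosedOutPartition A T S := by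
  obtain ⟨-, hdisj, hcover⟩ := h
  refine ⟨hout, fun u hu ↦ ?_⟩
  obtain ⟨v, hv, huv, -⟩ := Set.mem_iUnion₂.mp (hcover.symm ▸ hu)
  refine ⟨v, ⟨hv, huv⟩, fun w ⟨hw, huw⟩ ↦ by_contra fun hwv ↦ ?_⟩
  exact (hdisj w hw v hv hwv).subset ⟨⟨huw, hu⟩, ⟨huv, hu⟩⟩

theorem IsClosedOutPartition.subset (h : IsClosedOutPartition A T S) : S ⊆ T :=
  fun v hv ↦ h.1 v hv (self_mem_closedOut A v)

theorem IsClosedOutPartition.union (h : IsClosedOutPartition A T S)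
    (h' : IsClosedOutPartition A T' S') (hdisj : Disjoint T T') :
    IsClosedOutPartition A (T ∪ T') (S ∪ S') := by
  rw [Set.disjoint_left] at hdisj
  refine ⟨?_, ?_⟩
  · rintro v (hv | hv)
    · exact (h.1 v hv).trans Set.subset_union_left
    · exact (h'.1 v hv).trans Set.subset_union_right
  · rintro u (hu | hu)
    · obtain ⟨v, ⟨hv, huv⟩, huniq⟩ := h.2 u hu
      refine ⟨v, ⟨Or.inl hv, huv⟩, ?_⟩
      rintro w ⟨hw | hw, huw⟩
      · exact huniq w ⟨hw, huw⟩
      · exact absurd (h'.1 w hw huw) (hdisj hu)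
    · obtain ⟨v, ⟨hv, huv⟩, huniq⟩ := h'.2 u hu
      refine ⟨v, ⟨Or.inr hv, huv⟩, ?_⟩
      rintro w ⟨hw | hw, huw⟩
      · exact absurd hu (hdisj (h.1 w hw huw))
      · exact huniq w ⟨hw, huw⟩

end ClosedOutPartition

section Layering

variable {V : Type*} {A : V → V → Prop} {k n : ℕ} {T T' : Set V}

/-- A cyclic sequence of `n` layers in `T` (bi-infinite if `n = 0`, as `ZMod 0 = ℤ`) such that the
closed out-neighborhoods centered in each layer partition the part of `T` outside the preceding
layer. For `T = V`, the layers are the levels of an ECD set of the product with `C_n^0`. -/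
def IsECDLayering (A : V → V → Prop) (T : Set V) (S : ZMod n → Set V) : Prop :=
  ∀ i, IsClosedOutPartition A (T \ S (i - 1)) (S i)

theorem IsECDLayering.subset {S : ZMod n → Set V} (h : IsECDLayering A T S) (i : ZMod n) :
    S i ⊆ T :=
  (h i).subset.trans Set.sdiff_subset

theorem IsECDLayering.comp_castHom {S : ZMod n → Set V} (h : IsECDLayering A T S) (hnk : n ∣ k) :
    IsECDLayering A T (S ∘ ZMod.castHom hnk (ZMod n)) := fun i ↦ by
  simpa only [Function.comp_apply, map_sub, map_one] using h (ZMod.castHom hnk (ZMod n) i)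

theorem IsECDLayering.union {S S' : ZMod n → Set V} (h : IsECDLayering A T S)
    (h' : IsECDLayering A T' S') (hdisj : Disjoint T T') :
    IsECDLayering A (T ∪ T') (fun i ↦ S i ∪ S' i) := fun i ↦ by
  have hdiff : (T ∪ T') \ (S (i - 1) ∪ S' (i - 1)) = T \ S (i - 1) ∪ T' \ S' (i - 1) := by
    have hS : Disjoint T' (S (i - 1)) := (hdisj.mono_left (h.subset _)).symm
    have hS' : Disjoint T (S' (i - 1)) := hdisj.mono_right (h'.subset _)
    rw [Set.union_sdiff_distrib, ← Set.sdiff_sdiff, ← Set.sdiff_sdiff, hS.sdiff_eq_left,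
      (hS'.mono_left Set.sdiff_subset).sdiff_eq_left]
  rw [hdiff]
  exact (h i).union (h' i) (hdisj.mono Set.sdiff_subset Set.sdiff_subset)

theorem mem_closedOut_cartArc_cycArc {u v : V} {i j : ZMod k} :
    (u, j) ∈ closedOut (cartArc A (cycArc k)) (v, i) ↔
      i = j ∧ u ∈ closedOut A v ∨ i = j - 1 ∧ u = v := by
  simp only [mem_closedOut, cartArc, cycArc, Prod.mk.injEq, eq_sub_iff_add_eq]
  grind

theorem IsECDLayering.isECD_cartArc_cycArc {S : ZMod k → Set V}
    (h : IsECDLayering A Set.univ S) :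
    IsECD (cartArc A (cycArc k)) {p | p.1 ∈ S p.2} := by
  refine isECD_of_existsUnique fun ⟨u, j⟩ ↦ ?_
  by_cases hu : u ∈ S (j - 1)
  · refine ⟨(u, j - 1), ⟨hu, mem_closedOut_cartArc_cycArc.mpr (Or.inr ⟨rfl, rfl⟩)⟩, ?_⟩
    rintro ⟨v, i⟩ ⟨hv, huv⟩
    obtain ⟨rfl, huv'⟩ | ⟨rfl, rfl⟩ := mem_closedOut_cartArc_cycArc.mp huv
    · exact absurd hu ((h i).1 v hv huv').2
    · rfl
  · obtain ⟨v, ⟨hv, huv⟩, huniq⟩ := (h j).2 u ⟨Set.mem_univ u, hu⟩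
    refine ⟨(v, j), ⟨hv, mem_closedOut_cartArc_cycArc.mpr (Or.inl ⟨rfl, huv⟩)⟩, ?_⟩
    rintro ⟨w, i⟩ ⟨hw, huw⟩
    obtain ⟨rfl, huw'⟩ | ⟨rfl, rfl⟩ := mem_closedOut_cartArc_cycArc.mp huw
    · rw [huniq w ⟨hw, huw'⟩]
    · exact absurd hw hu

end Layering

section Families

variable {V : Type*} {A : V → V → Prop} {T W Z V' : Set V}

theorem InD1OnParts.isECDLayering (h : InD1OnParts A T W Z V')
    (hout : ∀ v ∈ W ∪ Z, closedOut A v ⊆ T) :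
    IsECDLayering (n := 2) A T ![W, Z] := by
  obtain ⟨rfl, hWZ, hWV', hZV', hW, hZ, hno⟩ := h
  rw [Set.disjoint_left] at hWZ hWV' hZV'
  have houtW : ∀ v ∈ W, closedOut A v ⊆ W ∪ V' := fun v hv u huv ↦ by
    have := hout v (Or.inl hv) huv
    grind [mem_closedOut]
  have houtZ : ∀ v ∈ Z, closedOut A v ⊆ Z ∪ V' := fun v hv u huv ↦ by
    have := hout v (Or.inr hv) huv
    grind [mem_closedOut]
  have hlayerW : IsClosedOutPartition A ((W ∪ Z ∪ V') \ Z) W := by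
    have hdiff : (W ∪ Z ∪ V') \ Z = W ∪ V' := by grind
    rw [hdiff]
    exact hW.isClosedOutPartition houtW
  have hlayerZ : IsClosedOutPartition A ((W ∪ Z ∪ V') \ W) Z := by
    have hdiff : (W ∪ Z ∪ V') \ W = Z ∪ V' := by grind
    rw [hdiff]
    exact hZ.isClosedOutPartition houtZ
  intro i
  fin_cases i
  · exact hlayerW
  · exact hlayerZ

theorem InD2On.exists_isECDLayering (h : InD2On A T) (hout : ∀ v ∈ T, closedOut A v ⊆ T) :
    ∃ S : ZMod 3 → Set V, IsECDLayering A T S := by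
  obtain ⟨U₁, U₂, U₃, rfl, h₁₂, h₁₃, h₂₃, harc, hU₁, hU₂, hU₃⟩ := h
  rw [Set.disjoint_left] at h₁₂ h₁₃ h₂₃
  have hmem : ∀ v ∈ U₁ ∪ U₂ ∪ U₃, ∀ u ∈ closedOut A v, u = v ∨
      (v ∈ U₁ ∧ u ∈ U₂) ∨ (v ∈ U₂ ∧ u ∈ U₃) ∨ (v ∈ U₃ ∧ u ∈ U₁) :=
    fun v hv u huv ↦ huv.imp id (harc v hv u (hout v hv huv))
  have hlayer₁ : IsClosedOutPartition A ((U₁ ∪ U₂ ∪ U₃) \ U₃) U₁ := by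
    have hdiff : (U₁ ∪ U₂ ∪ U₃) \ U₃ = U₁ ∪ U₂ := by grind
    have hout₁ : ∀ v ∈ U₁, closedOut A v ⊆ U₁ ∪ U₂ := fun v hv u huv ↦ by grind
    rw [hdiff]
    exact hU₁.isClosedOutPartition hout₁
  have hlayer₂ : IsClosedOutPartition A ((U₁ ∪ U₂ ∪ U₃) \ U₁) U₂ := by
    have hdiff : (U₁ ∪ U₂ ∪ U₃) \ U₁ = U₂ ∪ U₃ := by grind
    have hout₂ : ∀ v ∈ U₂, closedOut A v ⊆ U₂ ∪ U₃ := fun v hv u huv ↦ by grind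
    rw [hdiff]
    exact hU₂.isClosedOutPartition hout₂
  have hlayer₃ : IsClosedOutPartition A ((U₁ ∪ U₂ ∪ U₃) \ U₂) U₃ := by
    have hdiff : (U₁ ∪ U₂ ∪ U₃) \ U₂ = U₃ ∪ U₁ := by grind
    have hout₃ : ∀ v ∈ U₃, closedOut A v ⊆ U₃ ∪ U₁ := fun v hv u huv ↦ by grind
    rw [hdiff]
    exact hU₃.isClosedOutPartition hout₃
  refine ⟨![U₁, U₂, U₃], fun i ↦ ?_⟩
  fin_cases i
  · exact hlayer₁
  · exact hlayer₂
  · exact hlayer₃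

theorem InD3.exists_isECDLayering (h : InD3 A) :
    ∃ S : ZMod 6 → Set V, IsECDLayering A Set.univ S := by
  obtain ⟨V₁, V₂, W, Z, V', hV, hdisj, h₁, h₂, harc, -⟩ := h
  have hWZ : ∀ v ∈ W ∪ Z, v ∈ V₁ ∧ v ∉ V' := by
    obtain ⟨rfl, -, hWV', hZV', -⟩ := h₁
    exact fun v hv ↦ ⟨Or.inl hv, (hWV'.union_left hZV').notMem_of_mem_left hv⟩
  have hV₁V₂ : ∀ v ∈ V₁, v ∉ V₂ := fun _ hv ↦ hdisj.notMem_of_mem_left hv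
  have hout₁ : ∀ v ∈ W ∪ Z, closedOut A v ⊆ V₁ := by
    intro v hv u huv
    have := hWZ v hv
    grind [mem_closedOut]
  have hout₂ : ∀ v ∈ V₂, closedOut A v ⊆ V₂ := by
    obtain ⟨rfl, -⟩ := h₁
    intro v hv u huv
    grind [mem_closedOut]
  obtain ⟨S, hS⟩ := h₂.exists_isECDLayering hout₂
  have hWZ₆ := (h₁.isECDLayering hout₁).comp_castHom (k := 6) (by decide)
  have hS₆ := hS.comp_castHom (k := 6) (by decide)
  exact ⟨_, hV ▸ hWZ₆.union hS₆ hdisj⟩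

end Families

theorem cart_cycle_ecd_of_d3_general {V : Type*} (A : V → V → Prop) (k : ℕ) (hk6 : 6 ∣ k)
    (hD : InD3 A) : IsECDDigraph (cartArc A (cycArc k)) := by
  obtain ⟨S, hS⟩ := hD.exists_isECDLayering
  exact ⟨_, (hS.comp_castHom hk6).isECD_cartArc_cycArc⟩

/-- If `k ≥ 6` is divisible by 6 and the finite digraph `D` belongs to `𝒟₃`,
then `D □ C_k^0` is an ECD digraph. -/
theorem cart_cycle_ecd_of_d3 {V : Type*} [Fintype V] (A : V → V → Prop)
    (k : ℕ) (hk : 6 ≤ k) (hk6 : 6 ∣ k) (hD : InD3 A) :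
    IsECDDigraph (cartArc A (cycArc k)) :=
  cart_cycle_ecd_of_d3_general A k hk6 hD
end
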